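/- arXiv:1802.07935 — 4 statements merged into one kernel-verified Lean document; each statement's English description precedes it below -/
import Mathlib

section
/- Let d ≥ 1 and let a : ℕ → ℝ with a(n) ≥ 0 for all n, Σ_{n≥0} a(n) = ∞ and Σ_{n≥0} a(n)^2 < ∞. Let Y : ℕ → (nonempty subsets of {1,…,d}) and for each agent i and time n define ν(n,i) := #{m < n : i ∈ Y_m} (the number of times agent i was active before time n). Define ā(n) := max_{i ∈ Y_n} a(ν(n,i)). Then Σ_{n≥0} ā(n) = ∞ and Σ_{n≥0} ā(n)^2 < ∞. -/
open Filter

/-! For a fixed agent `i`, the values `ν(n,i)` at the times `n < N` at which `i` is active run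
through `0, 1, …, ν(N,i) - 1`, once each. Hence the sum of any `f (ν(n,i))` over these times is
`∑_{k < ν(N,i)} f k` (`sum_active_eq`).

Divergence: at each time at least one agent is active, so `N ≤ ∑ᵢ ν(N,i)` and, once `N ≥ d * K`,
some agent has been active at least `K` times. As `ā(n)` dominates `a(ν(n,i))` for every active
`i`, the `N`-th partial sum of `ā` is then at least the `K`-th partial sum of `a`.

Square summability: the maximum is attained, so `ā(n)²` is at most the sum of `a(ν(n,i))²` over
the active agents, and the partial sums of `ā²` are at most `d * ∑ a²`. -/

/-- Reindexing by the local clock: the active times of `i` before `N` correspond bijectively to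
the values `k < ν N i` of its counter. -/
lemma sum_active_eq {d : ℕ} {Y : ℕ → Finset (Fin d)} {ν : ℕ → Fin d → ℕ}
    (hν : ∀ n i, ν n i = ((Finset.range n).filter (fun m => i ∈ Y m)).card)
    (f : ℕ → ℝ) (i : Fin d) (N : ℕ) :
    ∑ n ∈ Finset.range N, (if i ∈ Y n then f (ν n i) else 0)
      = ∑ k ∈ Finset.range (ν N i), f k := by
  induction N with
  | zero => simp [hν]
  | succ N ih =>
    have hstep : ν (N + 1) i = if i ∈ Y N then ν N i + 1 else ν N i := by
      rw [hν (N + 1), hν N, Finset.range_add_one, Finset.filter_insert]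
      split_ifs <;> simp
    rw [Finset.sum_range_succ, ih, hstep]
    split_ifs
    · rw [Finset.sum_range_succ]
    · simp

lemma le_sum_counts {d : ℕ} {Y : ℕ → Finset (Fin d)} (hY : ∀ n, (Y n).Nonempty)
    {ν : ℕ → Fin d → ℕ}
    (hν : ∀ n i, ν n i = ((Finset.range n).filter (fun m => i ∈ Y m)).card) (N : ℕ) :
    N ≤ ∑ i, ν N i := by
  simp only [hν, Finset.card_filter]
  rw [Finset.sum_comm]
  calc N = ∑ n ∈ Finset.range N, 1 := by simp
    _ ≤ _ := Finset.sum_le_sum fun n _ => by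
      simpa [Finset.one_le_card] using hY n

/-- If `a(n) ≥ 0`, `Σ a(n) = ∞` and `Σ a(n)² < ∞`, `Y n` is the (nonempty) set of agents
active at time `n`, `ν(n,i) = #{m < n : i ∈ Y m}` and `ā(n) = max_{i ∈ Y n} a(ν(n,i))`,
then `Σ ā(n) = ∞` and `Σ ā(n)² < ∞`. -/
theorem stmt4 (d : ℕ) (hd : 1 ≤ d) (a : ℕ → ℝ) (ha0 : ∀ n, 0 ≤ a n)
    (hadiv : Tendsto (fun N => ∑ n ∈ Finset.range N, a n) atTop atTop)
    (hasq : Summable (fun n => a n ^ 2))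
    (Y : ℕ → Finset (Fin d)) (hY : ∀ n, (Y n).Nonempty)
    (ν : ℕ → Fin d → ℕ)
    (hν : ∀ n i, ν n i = ((Finset.range n).filter (fun m => i ∈ Y m)).card)
    (abar : ℕ → ℝ)
    (habar : ∀ n, abar n = (Y n).sup' (hY n) (fun i => a (ν n i))) :
    Tendsto (fun N => ∑ n ∈ Finset.range N, abar n) atTop atTop ∧
      Summable (fun n => abar n ^ 2) := by
  have hge : ∀ n, ∀ i ∈ Y n, a (ν n i) ≤ abar n := fun n i hi => by
    rw [habar]
    exact Finset.le_sup' (fun i => a (ν n i)) hi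
  have hnn : ∀ n, 0 ≤ abar n := fun n => by
    obtain ⟨i, hi⟩ := hY n
    exact (ha0 _).trans (hge n i hi)
  constructor
  · rw [tendsto_atTop]
    intro b
    obtain ⟨K, hK⟩ := (hadiv.eventually_ge_atTop b).exists
    filter_upwards [eventually_ge_atTop (d * K)] with N hN
    obtain ⟨i, -, hi⟩ : ∃ i ∈ (Finset.univ : Finset (Fin d)), K ≤ ν N i := by
      apply Finset.exists_le_of_sum_le
      · exact ⟨⟨0, hd⟩, Finset.mem_univ _⟩
      · simpa using hN.trans (le_sum_counts hY hν N)
    calc b ≤ ∑ k ∈ Finset.range K, a k := hK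
      _ ≤ ∑ k ∈ Finset.range (ν N i), a k :=
        Finset.sum_le_sum_of_subset_of_nonneg (Finset.range_mono hi) fun k _ _ => ha0 k
      _ = ∑ n ∈ Finset.range N, (if i ∈ Y n then a (ν n i) else 0) :=
        (sum_active_eq hν a i N).symm
      _ ≤ ∑ n ∈ Finset.range N, abar n := Finset.sum_le_sum fun n _ => by
        split_ifs with h
        · exact hge n i h
        · exact hnn n
  · refine summable_of_sum_range_le (c := ∑ _i : Fin d, ∑' k, a k ^ 2)
      (fun n => sq_nonneg _) fun N => ?_
    calc ∑ n ∈ Finset.range N, abar n ^ 2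
        ≤ ∑ n ∈ Finset.range N, ∑ i, (if i ∈ Y n then a (ν n i) ^ 2 else 0) :=
        Finset.sum_le_sum fun n _ => by
          obtain ⟨i, hi, hmax⟩ := Finset.exists_mem_eq_sup' (hY n) (fun i => a (ν n i))
          rw [habar, hmax]
          refine le_trans (by simp [hi]) (Finset.single_le_sum
            (f := fun i => if i ∈ Y n then a (ν n i) ^ 2 else 0)
            (fun j _ => by positivity) (Finset.mem_univ i))
      _ = ∑ i, ∑ k ∈ Finset.range (ν N i), a k ^ 2 := by
        rw [Finset.sum_comm]
        exact Finset.sum_congr rfl fun i _ => sum_active_eq hν (fun k => a k ^ 2) i N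
      _ ≤ ∑ _i : Fin d, ∑' k, a k ^ 2 := Finset.sum_le_sum fun i _ =>
        hasq.sum_le_tsum _ fun k _ => sq_nonneg _
end

section
/- Let η > 0, let a : ℕ → [0,∞) satisfy lim_{n→∞} a(n) n^η = 0 (i.e., a(n) = o(n^{−η})), and suppose there exists κ > 0 such that a(n) ≤ κ a(m) whenever m ≤ n. Let ν : ℕ → ℕ satisfy liminf_{n→∞} ν(n)/(n+1) ≥ τ for some τ > 0. Then lim_{n→∞} a(ν(n)) · n^η = 0. In particular, if a sequence of delays satisfies τ_n ≤ n^η for all sufficiently large n, then a(ν(n)) τ_n → 0. -/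
/-!
The liminf condition gives `ν n ≥ (τ / 2) (n + 1)` for all large `n`. Hence `ν n → ∞`, and
`n ^ η ≤ (2 / τ) ^ η * (ν n) ^ η`, so `a (ν n) * n ^ η` is at most a constant times the sequence
`a m * m ^ η` evaluated along `m = ν n → ∞`, which tends to `0`. The claim about delays follows by
comparison.
-/

open Filter

/-- If `a(n) = o(n^{−η})`, `a(n) ≤ κ a(m)` for `m ≤ n`, and the update counts satisfy
`liminf ν(n)/(n+1) ≥ τ > 0`, then `a(ν(n)) n^η → 0`; in particular, for any delay
sequence eventually bounded by `n^η`, `a(ν(n)) τ_n → 0`. -/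
theorem stmt10 (η : ℝ) (hη : 0 < η) (a : ℕ → ℝ) (ha0 : ∀ n, 0 ≤ a n)
    (hao : Tendsto (fun n : ℕ => a n * (n : ℝ) ^ η) atTop (nhds 0))
    (κ : ℝ) (hκ : 0 < κ) (hmono : ∀ m n : ℕ, m ≤ n → a n ≤ κ * a m)
    (ν : ℕ → ℕ) (τ : ℝ) (hτ : 0 < τ)
    (hν : τ ≤ liminf (fun n : ℕ => (ν n : ℝ) / ((n : ℝ) + 1)) atTop) :
    Tendsto (fun n : ℕ => a (ν n) * (n : ℝ) ^ η) atTop (nhds 0) ∧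
      ∀ τd : ℕ → ℕ, (∀ᶠ (n : ℕ) in atTop, (τd n : ℝ) ≤ (n : ℝ) ^ η) →
        Tendsto (fun n : ℕ => a (ν n) * (τd n : ℝ)) atTop (nhds 0) := by
  have hbdd : IsBoundedUnder (· ≥ ·) atTop (fun n : ℕ => (ν n : ℝ) / ((n : ℝ) + 1)) :=
    isBoundedUnder_of ⟨0, fun n => by positivity⟩
  have hev : ∀ᶠ n : ℕ in atTop, τ / 2 * ((n : ℝ) + 1) < ν n := by
    filter_upwards [eventually_lt_of_lt_liminf
      (lt_of_lt_of_le (half_lt_self hτ) hν) hbdd] with n hn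
    rwa [lt_div_iff₀ (by positivity)] at hn
  have hνtop : Tendsto ν atTop atTop := by
    rw [← tendsto_natCast_atTop_iff (R := ℝ)]
    refine tendsto_atTop_mono' atTop (f₁ := fun n : ℕ => τ / 2 * (n : ℝ)) ?_
      (tendsto_natCast_atTop_atTop.const_mul_atTop (half_pos hτ))
    filter_upwards [hev] with n hn
    linarith
  have hmain : Tendsto (fun n : ℕ => a (ν n) * (n : ℝ) ^ η) atTop (nhds 0) := by
    have hlim : Tendsto (fun n : ℕ => (2 / τ) ^ η * (a (ν n) * (ν n : ℝ) ^ η)) atTop (nhds 0) := by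
      simpa using (hao.comp hνtop).const_mul ((2 / τ) ^ η)
    refine squeeze_zero' (Eventually.of_forall fun n => mul_nonneg (ha0 _) (by positivity)) ?_ hlim
    filter_upwards [hev] with n hn
    have hle : (n : ℝ) ≤ 2 / τ * ν n := by
      rw [div_mul_eq_mul_div, le_div_iff₀ hτ]
      linarith
    calc a (ν n) * (n : ℝ) ^ η ≤ a (ν n) * (2 / τ * ν n) ^ η :=
          mul_le_mul_of_nonneg_left (Real.rpow_le_rpow (by positivity) hle hη.le) (ha0 _)
      _ = (2 / τ) ^ η * (a (ν n) * (ν n : ℝ) ^ η) := by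
          rw [Real.mul_rpow (by positivity) (by positivity)]
          ring
  refine ⟨hmain, fun τd hτd => ?_⟩
  refine squeeze_zero' (Eventually.of_forall fun n => mul_nonneg (ha0 _) (by positivity)) ?_ hmain
  filter_upwards [hτd] with n hn
  exact mul_le_mul_of_nonneg_left hn (ha0 _)
end

section
/- Let d ≥ 1, let ν = (ν_1,…,ν_d) with ν_i > 0 for all i, let 0 < α < 1, and let T : ℝ^d → ℝ^d satisfy ‖Tx − Ty‖_ν ≤ α ‖x − y‖_ν for all x, y. Fix ε > 0 and N ≥ 0. Let (J_n)_{n≥N} and (Ĵ_n)_{n≥N} be sequences in ℝ^d evolving componentwise as J_{n+1}(i) = J_n(i) + b_n(i) [ (T J_n)(i) − J_n(i) + ε_n(i) ] and Ĵ_{n+1}(i) = Ĵ_n(i) + b_n(i) [ (T Ĵ_n)(i) − Ĵ_n(i) + ε̂_n(i) ], where b_n(i) ∈ [0,1] for all n, i, and where ‖ε_n‖_ν ≤ ε and ‖ε̂_n‖_ν ≤ ε for all n ≥ N. Then for every n ≥ N, ‖J_n − Ĵ_n‖_ν ≤ max( ‖J_N − Ĵ_N‖_ν , 2ε/(1 −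 α) ). -/
/-!
The bound `M = max (‖J_N − Ĵ_N‖_ν) (2ε/(1−α))` is invariant under one step. In each component the
new difference is the convex combination, with weight `b_n(i)`, of the old difference, which is at
most `M ν_i`, and of `(T J_n − T Ĵ_n)(i) + ε_n(i) − ε̂_n(i)`, which is at most `(α M + 2ε) ν_i`.
Since `2ε/(1−α) ≤ M`, the latter is again at most `M ν_i`.
-/

open Filter

/-- Weighted max-norm `‖x‖_ν := max_i |x_i| / ν_i` on `ℝ^d`. -/
noncomputable def wmaxNorm {d : ℕ} (ν : Fin d → ℝ) (x : Fin d → ℝ) : ℝ :=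
  ⨆ i, |x i| / ν i

theorem abs_le_of_wmaxNorm_le {d : ℕ} {ν x : Fin d → ℝ} (hν : ∀ i, 0 < ν i) {c : ℝ}
    (h : wmaxNorm ν x ≤ c) (i : Fin d) : |x i| ≤ c * ν i := by
  have h1 : |x i| / ν i ≤ wmaxNorm ν x :=
    le_ciSup (f := fun i => |x i| / ν i) (Set.finite_range _).bddAbove i
  exact (div_le_iff₀ (hν i)).1 (h1.trans h)

/-- For an `α`-contraction `T` in the weighted max-norm, iterates of asynchronous
approximate value iteration and of its projective counterpart, both with per-component
step-sizes `b_n(i) ∈ [0,1]` and errors bounded by `ε` in the weighted max-norm, stay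
within distance `max(‖J_N − Ĵ_N‖_ν, 2ε/(1−α))` of each other. -/
theorem stmt13 (d : ℕ) (hd : 1 ≤ d) (ν : Fin d → ℝ) (hν : ∀ i, 0 < ν i)
    (α : ℝ) (hα0 : 0 < α) (hα1 : α < 1)
    (T : (Fin d → ℝ) → (Fin d → ℝ))
    (hT : ∀ x y, wmaxNorm ν (T x - T y) ≤ α * wmaxNorm ν (x - y))
    (ε : ℝ) (hε : 0 < ε) (N : ℕ)
    (J Jhat : ℕ → Fin d → ℝ) (b : ℕ → Fin d → ℝ) (e ehat : ℕ → Fin d → ℝ)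
    (hb : ∀ n i, b n i ∈ Set.Icc (0 : ℝ) 1)
    (he : ∀ n ≥ N, wmaxNorm ν (e n) ≤ ε) (hehat : ∀ n ≥ N, wmaxNorm ν (ehat n) ≤ ε)
    (hJ : ∀ n ≥ N, ∀ i, J (n + 1) i = J n i + b n i * (T (J n) i - J n i + e n i))
    (hJhat : ∀ n ≥ N, ∀ i,
      Jhat (n + 1) i = Jhat n i + b n i * (T (Jhat n) i - Jhat n i + ehat n i)) :
    ∀ n ≥ N, wmaxNorm ν (J n - Jhat n) ≤
      max (wmaxNorm ν (J N - Jhat N)) (2 * ε / (1 - α)) := by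
  have : Nonempty (Fin d) := ⟨⟨0, hd⟩⟩
  set M := max (wmaxNorm ν (J N - Jhat N)) (2 * ε / (1 - α)) with hM
  have hM2 : α * M + 2 * ε ≤ M := by
    have h : 2 * ε / (1 - α) ≤ M := le_max_right _ _
    rw [div_le_iff₀ (by linarith)] at h
    linarith
  intro n hn
  induction n, hn using Nat.le_induction with
  | base => exact le_max_left _ _
  | succ n hn ih =>
    refine ciSup_le fun i => ?_
    rw [div_le_iff₀ (hν i)]
    have h1 := abs_le.1 (abs_le_of_wmaxNorm_le hν ih i)
    have h2 := abs_le.1 (abs_le_of_wmaxNorm_le hν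
      ((hT (J n) (Jhat n)).trans (mul_le_mul_of_nonneg_left ih hα0.le)) i)
    have h3 := abs_le.1 (abs_le_of_wmaxNorm_le hν (he n hn) i)
    have h4 := abs_le.1 (abs_le_of_wmaxNorm_le hν (hehat n hn) i)
    have h5 := mul_le_mul_of_nonneg_right hM2 (hν i).le
    obtain ⟨hb0, hb1⟩ := hb n i
    simp only [Pi.sub_apply] at h1 h2 ⊢
    have key : J (n + 1) i - Jhat (n + 1) i = (1 - b n i) * (J n i - Jhat n i)
        + b n i * (T (J n) i - T (Jhat n) i + e n i - ehat n i) := by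
      rw [hJ n hn i, hJhat n hn i]
      ring
    have hs : |T (J n) i - T (Jhat n) i + e n i - ehat n i| ≤ M * ν i :=
      abs_le.2 ⟨by linarith, by linarith⟩
    obtain ⟨hs1, hs2⟩ := abs_le.1 hs
    have hc : 0 ≤ 1 - b n i := sub_nonneg.2 hb1
    rw [key, abs_le]
    constructor
    · linarith [mul_le_mul_of_nonneg_left h1.1 hc, mul_le_mul_of_nonneg_left hs1 hb0]
    · linarith [mul_le_mul_of_nonneg_left h1.2 hc, mul_le_mul_of_nonneg_left hs2 hb0]
end

section
/- Let p be a norm on ℝ^d and let T : ℝ^d → ℝ^d be nonexpansive with respect to p, i.e., p(Tx − Ty) ≤ p(x − y) for all x, y. Let a : ℕ → [0,1] satisfy Σ_{n≥0} a(n)^2 < ∞. Let N ≥ 0 and let (J_n)_{n≥N}, (Ĵ_n)_{n≥N} satisfy J_{n+1} = J_n + a(n)(T J_n − J_n + ε_n) and Ĵ_{n+1} = Ĵ_n + a(n)(T Ĵ_n − Ĵ_n + ε̂_n) for n ≥ N, with p(ε_n − ε̂_n) ≤ a(n) for all n ≥ N. Then for every k ≥ 1, p(J_{N+k} − Ĵ_{N+k})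 ≤ p(J_N − Ĵ_N) + Σ_{n=N}^{N+k−1} a(n) p(ε_n − ε̂_n) ≤ p(J_N − Ĵ_N) + Σ_{n≥0} a(n)^2; in particular sup_{k≥0} p(J_{N+k} − Ĵ_{N+k}) < ∞. -/
/-!
Since `a n ∈ [0, 1]`, the averaged map `x ↦ (1 - a n) x + a n T x` is again `p`-nonexpansive, so
a single step increases `p (J n - Jhat n)` by at most `a n * p (e n - ehat n) ≤ a n ^ 2`.
Summing these increments gives the first bound, and comparing the partial sum of squares with
the whole series gives the second, which is uniform in `k`.
-/

open Filter

/-- For a `p`-nonexpansive `T`, step-sizes `a(n) ∈ [0,1]` with `Σ a(n)² < ∞`, and two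
approximate fixed-point iterations whose errors satisfy `p(ε_n − ε̂_n) ≤ a(n)`, the
iterates satisfy, for all `k ≥ 1`,
`p(J_{N+k} − Ĵ_{N+k}) ≤ p(J_N − Ĵ_N) + Σ_{n=N}^{N+k−1} a(n) p(ε_n − ε̂_n)
  ≤ p(J_N − Ĵ_N) + Σ_{n≥0} a(n)²`; in particular the distance stays bounded. -/
theorem stmt15 (d : ℕ) (p : (Fin d → ℝ) → ℝ)
    (hp_tri : ∀ x y, p (x + y) ≤ p x + p y)
    (hp_smul : ∀ (c : ℝ) (x : Fin d → ℝ), p (c • x) = |c| * p x)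
    (hp_def : ∀ x, p x = 0 → x = 0)
    (T : (Fin d → ℝ) → (Fin d → ℝ)) (hT : ∀ x y, p (T x - T y) ≤ p (x - y))
    (a : ℕ → ℝ) (ha : ∀ n, a n ∈ Set.Icc (0 : ℝ) 1)
    (hasq : Summable fun n => a n ^ 2)
    (N : ℕ) (J Jhat : ℕ → Fin d → ℝ) (e ehat : ℕ → Fin d → ℝ)
    (hJ : ∀ n ≥ N, J (n + 1) = J n + a n • (T (J n) - J n + e n))
    (hJhat : ∀ n ≥ N, Jhat (n + 1) = Jhat n + a n • (T (Jhat n) - Jhat n + ehat n))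
    (herr : ∀ n ≥ N, p (e n - ehat n) ≤ a n) :
    (∀ k : ℕ, 1 ≤ k →
        p (J (N + k) - Jhat (N + k)) ≤
            p (J N - Jhat N) + ∑ n ∈ Finset.Ico N (N + k), a n * p (e n - ehat n) ∧
          p (J (N + k) - Jhat (N + k)) ≤ p (J N - Jhat N) + ∑' n : ℕ, a n ^ 2) ∧
      ∃ C : ℝ, ∀ k : ℕ, p (J (N + k) - Jhat (N + k)) ≤ C := by
  -- One step: the difference of the new iterates is a convex combination of the old
  -- difference and the difference of the images, plus the scaled error difference.
  have step : ∀ n ≥ N, p (J (n + 1) - Jhat (n + 1)) ≤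
      p (J n - Jhat n) + a n * p (e n - ehat n) := by
    intro n hn
    obtain ⟨h0, h1⟩ := ha n
    have hdecomp : J (n + 1) - Jhat (n + 1) =
        ((1 - a n) • (J n - Jhat n) + a n • (T (J n) - T (Jhat n))) +
          a n • (e n - ehat n) := by
      rw [hJ n hn, hJhat n hn]
      module
    have hA := hp_tri ((1 - a n) • (J n - Jhat n) + a n • (T (J n) - T (Jhat n)))
      (a n • (e n - ehat n))
    have hB := hp_tri ((1 - a n) • (J n - Jhat n)) (a n • (T (J n) - T (Jhat n)))
    rw [hp_smul, abs_of_nonneg h0] at hA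
    rw [hp_smul, hp_smul, abs_of_nonneg h0, abs_of_nonneg (sub_nonneg.2 h1)] at hB
    have hC := mul_le_mul_of_nonneg_left (hT (J n) (Jhat n)) h0
    rw [hdecomp]
    linarith
  have first : ∀ k : ℕ, p (J (N + k) - Jhat (N + k)) ≤
      p (J N - Jhat N) + ∑ n ∈ Finset.Ico N (N + k), a n * p (e n - ehat n) := by
    intro k
    induction k with
    | zero => simp
    | succ k ih =>
      rw [← add_assoc, Finset.sum_Ico_succ_top (Nat.le_add_right N k)]
      linarith [step (N + k) (Nat.le_add_right N k)]
  have second : ∀ k : ℕ, p (J (N + k) - Jhat (N + k)) ≤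
      p (J N - Jhat N) + ∑' n : ℕ, a n ^ 2 := by
    intro k
    have hle : ∑ n ∈ Finset.Ico N (N + k), a n * p (e n - ehat n) ≤
        ∑ n ∈ Finset.Ico N (N + k), a n ^ 2 := by
      refine Finset.sum_le_sum fun n hn => ?_
      rw [sq]
      exact mul_le_mul_of_nonneg_left (herr n (Finset.mem_Ico.1 hn).1) (ha n).1
    have htsum := hasq.sum_le_tsum (Finset.Ico N (N + k)) (fun n _ => sq_nonneg (a n))
    linarith [first k]
  exact ⟨fun k _ => ⟨first k, second k⟩, _, second⟩
end
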